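/- Let F be a finite field of odd cardinality q and ψ : F → ℂ a nontrivial additive character. Let Q_{E₈}(x) = ∑_{i=1}^{8} x_i² − (x₁x₃ + x₃x₄ + x₄x₅ + x₅x₆ + x₆x₇ + x₇x₈ + x₂x₄) (half the quadratic form of the Cartan matrix of type E₈ in Bourbaki numbering). Then ∑_{x ∈ F⁸} ψ(Q_{E₈}(x)) = q⁴. (This is the Weil index γ(E₈) = 1.) -/

import Mathlib

open Finset

lemma E8aux_prod {F : Type*} [Field F] (ψ : AddChar F ℂ) (f : Fin 8 → F) :
    ψ (∑ i, f i) = ∏ i, ψ (f i) := by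
  simp only [Fin.sum_univ_eight, Fin.prod_univ_eight, AddChar.map_add_eq_mul]

lemma E8aux_two {F : Type*} [Field F] [Fintype F] (hq : Odd (Fintype.card F)) : (2 : F) ≠ 0 := by
  have h : ringChar F ≠ 2 := by
    intro h
    have := FiniteField.even_card_of_char_two h
    rw [Nat.odd_iff] at hq
    omega
  exact Ring.two_ne_zero h

/-- `g * h = q` for the two one-dimensional Gauss sums of opposite sign. -/
lemma E8aux_mul {F : Type*} [Field F] [Fintype F] (h2 : (2 : F) ≠ 0)
    (ψ : AddChar F ℂ) (hψ : ψ ≠ 1) :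
    (∑ u : F, ψ (u ^ 2 / 2)) * (∑ v : F, ψ (-(v ^ 2 / 2))) = (Fintype.card F : ℂ) := by
  classical
  rw [Fintype.sum_mul_sum, ← Fintype.sum_prod_type']
  let e : F × F ≃ F × F :=
    { toFun := fun p => (p.1 + p.2, p.1 - p.2)
      invFun := fun p => ((p.1 + p.2) / 2, (p.1 - p.2) / 2)
      left_inv := fun p => by ext <;> field_simp <;> ring
      right_inv := fun p => by ext <;> field_simp <;> ring }
  rw [← e.sum_comp, Fintype.sum_prod_type]
  have hp : ψ.IsPrimitive := AddChar.IsPrimitive.of_ne_one hψ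
  have h : ∀ s : F, ∑ t : F, ψ ((e (s, t)).1 ^ 2 / 2) * ψ (-((e (s, t)).2 ^ 2 / 2))
      = if s = 0 then (Fintype.card F : ℂ) else 0 := by
    intro s
    have := AddChar.sum_mulShift (2 * s) hp
    simp only [mul_eq_zero, h2, false_or] at this
    push_cast at this
    rw [← this]
    refine Finset.sum_congr rfl fun t _ => ?_
    rw [← AddChar.map_add_eq_mul]
    congr 1
    simp only [e, Equiv.coe_fn_mk]
    field_simp
    ring
  simp only [h]
  simp

/-- `g ^ 2 = h ^ 2`, as `-1` is a sum of two squares. -/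
lemma E8aux_sq {F : Type*} [Field F] [Fintype F]
    (ψ : AddChar F ℂ) :
    (∑ u : F, ψ (u ^ 2 / 2)) ^ 2 = (∑ v : F, ψ (-(v ^ 2 / 2))) ^ 2 := by
  classical
  obtain ⟨a, b, hab⟩ : ∃ a b : F, a ^ 2 + b ^ 2 = -1 := by
    have : NeZero (ringChar F) := ⟨CharP.ringChar_ne_zero_of_finite F⟩
    obtain ⟨a, b, h⟩ := CharP.sq_add_sq F (ringChar F) (-1)
    exact ⟨a, b, by simpa using h⟩
  rw [sq, sq, Fintype.sum_mul_sum, Fintype.sum_mul_sum, ← Fintype.sum_prod_type',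
    ← Fintype.sum_prod_type']
  let e : F × F ≃ F × F :=
    { toFun := fun p => (a * p.1 - b * p.2, b * p.1 + a * p.2)
      invFun := fun p => (-(a * p.1 + b * p.2), -(a * p.2 - b * p.1))
      left_inv := fun p => by
        ext
        · linear_combination (-p.1) * hab
        · linear_combination (-p.2) * hab
      right_inv := fun p => by
        ext
        · linear_combination (-p.1) * hab
        · linear_combination (-p.2) * hab }
  rw [← e.sum_comp]
  refine Finset.sum_congr rfl fun p _ => ?_
  rw [← AddChar.map_add_eq_mul, ← AddChar.map_add_eq_mul]
  congr 1
  simp only [e, Equiv.coe_fn_mk]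
  linear_combination ((p.1 ^ 2 + p.2 ^ 2) / 2) * hab

/-- Coordinates in the orthonormal basis of the Bourbaki realization of `E₈`. -/
def E8aux_equiv {F : Type*} [Field F] (h2 : (2 : F) ≠ 0) : (Fin 8 → F) ≃ (Fin 8 → F) where
  toFun x := ![x 0 / 2 + x 1 - x 2, -(x 0 / 2) + x 1 + x 2 - x 3, -(x 0 / 2) + x 3 - x 4,
    -(x 0 / 2) + x 4 - x 5, -(x 0 / 2) + x 5 - x 6, -(x 0 / 2) + x 6 - x 7,
    -(x 0 / 2) + x 7, x 0 / 2]
  invFun y := ![2 * y 7,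
    (y 0 + y 1 + (y 2 + y 3 + y 4 + y 5 + y 6 + 5 * y 7)) / 2,
    (y 0 + y 1 + (y 2 + y 3 + y 4 + y 5 + y 6 + 5 * y 7)) / 2 + y 7 - y 0,
    y 2 + y 3 + y 4 + y 5 + y 6 + 5 * y 7,
    y 3 + y 4 + y 5 + y 6 + 4 * y 7,
    y 4 + y 5 + y 6 + 3 * y 7,
    y 5 + y 6 + 2 * y 7,
    y 6 + y 7]
  left_inv x := by
    ext i
    fin_cases i <;> simp <;> field_simp <;> ring
  right_inv y := by
    ext i
    fin_cases i <;> simp <;> field_simp <;> ring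


/-- The Weil index of type `E₈` equals `1`: `∑_{x ∈ F⁸} ψ(Q_{E₈}(x)) = q⁴`, where `Q_{E₈}` is
half the quadratic form of the Cartan matrix of type `E₈` (Bourbaki numbering). -/
theorem weilIndex_E8 {F : Type*} [Field F] [Fintype F]
    (hq : Odd (Fintype.card F))
    (ψ : AddChar F ℂ) (hψ : ψ ≠ 1) :
    ∑ x : Fin 8 → F,
        ψ ((∑ i, x i ^ 2) -
            (x 0 * x 2 + x 2 * x 3 + x 3 * x 4 + x 4 * x 5 + x 5 * x 6 + x 6 * x 7
              + x 1 * x 3)) =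
      (Fintype.card F : ℂ) ^ 4 := by
  classical
  have h2 := E8aux_two hq
  have key : ∑ x : Fin 8 → F, ψ ((∑ i, x i ^ 2) -
            (x 0 * x 2 + x 2 * x 3 + x 3 * x 4 + x 4 * x 5 + x 5 * x 6 + x 6 * x 7
              + x 1 * x 3)) = (∑ u : F, ψ (u ^ 2 / 2)) ^ 8 := by
    rw [Fintype.sum_pow, ← (E8aux_equiv h2).sum_comp (fun y => ∏ i, ψ (y i ^ 2 / 2))]
    refine Finset.sum_congr rfl fun x _ => ?_
    rw [← E8aux_prod ψ fun i => (E8aux_equiv h2 x i) ^ 2 / 2]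
    congr 1
    simp [Fin.sum_univ_eight, E8aux_equiv]
    field_simp
    ring
  rw [key, ← E8aux_mul h2 ψ hψ, mul_pow]
  have := E8aux_sq ψ
  calc _ = (∑ u : F, ψ (u ^ 2 / 2)) ^ 4 * ((∑ u : F, ψ (u ^ 2 / 2)) ^ 2) ^ 2 := by ring
    _ = _ := by rw [this]; ring
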